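/- arXiv:0808.1442 — 2 statements merged into one kernel-verified Lean document; each statement's English description precedes it below -/
import Mathlib

section
/- For every τ in the complex upper half-plane ℍ (so 0 < |q| < 1), one has M(q) = −(1/(2·Θ₂(τ)))·Σ_{n∈ℤ} q^{16n²−8n}/(1 + q^{16n−8}). -/
noncomputable section
open Complex Real

/-- `q = e^{2πiτ}`. -/
def nome (τ : ℂ) : ℂ := Complex.exp (2 * (π : ℂ) * I * τ)

/-- `Θ₂(τ) = Σ_{n≥0} q^{(2n+1)²}`. -/
def Theta2 (τ : ℂ) : ℂ := ∑' n : ℕ, nome τ ^ ((2 * n + 1) ^ 2)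

/-- The mock theta function
`M(x) = x⁻¹ Σ_{n≥0} (−1)^{n+1} x^{8(n+1)²} ∏_{k=1}^n (1−x^{16k−8}) / ∏_{k=1}^{n+1} (1+x^{16k−8})²`. -/
def Mser (x : ℂ) : ℂ :=
  x⁻¹ * ∑' n : ℕ, (-1 : ℂ) ^ (n + 1) * x ^ (8 * (n + 1) ^ 2) *
    (∏ k ∈ Finset.range n, (1 - x ^ (16 * (k + 1) - 8))) /
    (∏ k ∈ Finset.range (n + 1), (1 + x ^ (16 * (k + 1) - 8)) ^ 2)

/-!
Bailey's lemma: if `α` and `β` are related by the kernel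
`K(n, r) = 1 / ((q; q)_{n-r} (a; q)_{n+r+1})`, that is `β_n = ∑_r α_r K(n, r)`, then summing `β`
against weights `δ` amounts to summing `α` against `γ_r = ∑_n δ_n K(n, r)`. For the weights
`δ_n = (-1)^n q^{n(n-1)/2} s^n (ρ; q)_n` with `ρ s = a q`, the sequence `γ` satisfies a first-order
recurrence in `r`, because a combination of its summands telescopes in `n`; so it is known up to
the constant `γ_0`. The unit Bailey pair `β = (1, 0, 0, …)` determines `γ_0` as the inverse of a
theta series, and the pair with `β_n = 1 / ((b; q)_{n+1} (c; q)_{n+1})`, `a = b c`, turns the mock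
theta function into an Appell–Lerch sum times the same `γ_0`.

With `Q = x ^ 8`, the function `M(x)` is the case of base `Q ^ 2` and `b = c = -Q`, `ρ = Q`,
`s = Q ^ 3`. The summands of the bilateral Appell–Lerch sum are invariant under `n ↦ 1 - n`, which
accounts for the factor `2`.
-/

open Filter Topology Asymptotics Finset

section BaileyPairs

variable {K : Type*} [Field K]

/-- The finite `q`-Pochhammer symbol `(a; q)_n = ∏_{k < n} (1 - a q^k)`. -/
def qPochhammer (a q : K) (n : ℕ) : K := ∏ k ∈ range n, (1 - a * q ^ k)

/-- The Bailey kernel `1 / ((q; q)_{n-r} (a; q)_{n+r+1})`, extended by zero to `n < r`.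
It is `1 / (1 - a)` times the usual kernel `1 / ((q; q)_{n-r} (aq; q)_{n+r})`, which spares the
unit Bailey pair a division by `1 - a`. -/
def baileyKernel (a q : K) (n r : ℕ) : K :=
  if r ≤ n then (qPochhammer q q (n - r) * qPochhammer a q (n + r + 1))⁻¹ else 0

/-- `(α, β)` is a Bailey pair relative to `a` (for the normalisation of `baileyKernel`). -/
def IsBaileyPair (a q : K) (α β : ℕ → K) : Prop :=
  ∀ n, β n = ∑ r ∈ range (n + 1), α r * baileyKernel a q n r

/-- The `α`-sequence of the unit Bailey pair relative to `a`, whose `β`-sequence is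
`1, 0, 0, …`. -/
def unitAlpha (a q : K) (r : ℕ) : K :=
  (-1) ^ r * q ^ r.choose 2 * (1 - a * q ^ (2 * r)) * qPochhammer a q r / qPochhammer q q r

/-- The `α`-sequence relative to `a = b c` of the Bailey pair with
`β_n = 1 / ((b; q)_{n+1} (c; q)_{n+1})`. -/
def reciprocalAlpha (b c q : K) (r : ℕ) : K :=
  unitAlpha (b * c) q r * (q ^ r / ((1 - b * q ^ r) * (1 - c * q ^ r)))

/-- The weights `δ_n = (ρ; q)_n (-1)^n q^{n(n-1)/2} s^n` of Bailey's lemma with one parameter sent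
to infinity; in the usual notation `s = a q / ρ`. -/
def baileyWeight (ρ s q : K) (n : ℕ) : K :=
  (-1) ^ n * q ^ n.choose 2 * s ^ n * qPochhammer ρ q n

variable {a b c q ρ s : K}

@[simp]
lemma qPochhammer_zero (a q : K) : qPochhammer a q 0 = 1 := prod_range_zero _

lemma qPochhammer_succ (a q : K) (n : ℕ) :
    qPochhammer a q (n + 1) = qPochhammer a q n * (1 - a * q ^ n) :=
  prod_range_succ _ _

lemma one_sub_mul_qPochhammer_mul (a q : K) (n : ℕ) :
    (1 - a) * qPochhammer (a * q) q n = qPochhammer a q n * (1 - a * q ^ n) := by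
  rw [← qPochhammer_succ, qPochhammer, qPochhammer, prod_range_succ', mul_comm]
  simp only [pow_zero, mul_one, pow_succ', mul_assoc]

lemma qPochhammer_ne_zero (ha : ∀ k, a * q ^ k ≠ 1) (n : ℕ) : qPochhammer a q n ≠ 0 :=
  prod_ne_zero_iff.mpr fun k _ => sub_ne_zero.mpr (ha k).symm

lemma baileyKernel_of_lt (a q : K) {n r : ℕ} (h : n < r) : baileyKernel a q n r = 0 :=
  if_neg h.not_ge

lemma baileyKernel_add (a q : K) (r m : ℕ) :
    baileyKernel a q (r + m) r = (qPochhammer q q m * qPochhammer a q (2 * r + m + 1))⁻¹ := by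
  rw [baileyKernel, if_pos (Nat.le_add_right r m), Nat.add_sub_cancel_left]
  congr 3
  ring

lemma baileyKernel_succ_succ (ha : ∀ k, a * q ^ k ≠ 1) (n r : ℕ) :
    baileyKernel a q (n + 1) (r + 1) * ((1 - a * q ^ (n + r + 1)) * (1 - a * q ^ (n + r + 2))) =
      baileyKernel a q n r := by
  rcases lt_or_ge n r with h | h
  · rw [baileyKernel_of_lt a q h, baileyKernel_of_lt a q (by omega), zero_mul]
  obtain ⟨m, rfl⟩ := Nat.exists_eq_add_of_le h
  have h₁ : 1 - a * q ^ (2 * r + m + 1) ≠ 0 := sub_ne_zero.mpr (ha _).symm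
  have h₂ : 1 - a * q ^ (2 * r + m + 2) ≠ 0 := sub_ne_zero.mpr (ha _).symm
  rw [show r + m + 1 = r + 1 + m by ring, baileyKernel_add, baileyKernel_add,
    show 2 * (r + 1) + m + 1 = 2 * r + m + 1 + 1 + 1 by ring, qPochhammer_succ a q (_ + 1),
    qPochhammer_succ, show r + m + r + 1 = 2 * r + m + 1 by ring,
    show r + m + r + 2 = 2 * r + m + 2 by ring]
  field_simp

-- Multiplying by `q ^ r` turns the factor `1 - q ^ (n - r)` into `q ^ r - q ^ n`, free of
-- truncated subtraction, so the relation also holds for `n < r`.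
lemma baileyKernel_succ_right (hq : ∀ k, q * q ^ k ≠ 1) (ha : ∀ k, a * q ^ k ≠ 1) (n r : ℕ) :
    q ^ r * (baileyKernel a q n (r + 1) * (1 - a * q ^ (n + r + 1))) =
      (q ^ r - q ^ n) * baileyKernel a q n r := by
  rcases lt_trichotomy n r with h | rfl | h
  · simp only [baileyKernel_of_lt a q h, baileyKernel_of_lt a q (h.trans r.lt_succ_self),
      zero_mul, mul_zero]
  · rw [baileyKernel_of_lt a q n.lt_succ_self, sub_self, zero_mul, zero_mul, mul_zero]
  obtain ⟨m, rfl⟩ := Nat.exists_eq_add_of_lt h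
  have h₁ : 1 - q * q ^ m ≠ 0 := sub_ne_zero.mpr (hq _).symm
  have h₂ : 1 - a * q ^ (2 * r + m + 2) ≠ 0 := sub_ne_zero.mpr (ha _).symm
  rw [show r + m + 1 = r + (m + 1) by ring, baileyKernel_add,
    show r + (m + 1) = r + 1 + m by ring, baileyKernel_add,
    show 2 * (r + 1) + m + 1 = 2 * r + (m + 1) + 1 + 1 by ring, qPochhammer_succ a q (_ + 1),
    qPochhammer_succ q q m, show r + 1 + m + r + 1 = 2 * r + m + 2 by ring,
    show 2 * r + (m + 1) + 1 = 2 * r + m + 2 by ring]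
  field_simp
  ring

lemma baileyKernel_succ_left (hq : ∀ k, q * q ^ k ≠ 1) (ha : ∀ k, a * q ^ k ≠ 1) (n r : ℕ) :
    (q ^ r - q ^ (n + 1)) * (1 - a * q ^ (n + r + 1)) * baileyKernel a q (n + 1) r =
      q ^ r * baileyKernel a q n r := by
  have h := baileyKernel_succ_right hq ha (n + 1) r
  rw [show n + 1 + r + 1 = n + r + 2 by ring] at h
  rw [← baileyKernel_succ_succ ha n r]
  linear_combination -(1 - a * q ^ (n + r + 1)) * h

lemma sum_range_unitAlpha_mul_baileyKernel (hq : ∀ k, q * q ^ k ≠ 1) (ha : ∀ k, a * q ^ k ≠ 1)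
    (n R : ℕ) :
    (1 - q ^ n) * ∑ r ∈ range R, unitAlpha a q r * baileyKernel a q n r =
      -((-1) ^ R * q ^ R.choose 2 * (1 - q ^ R) * (1 - a * q ^ (n + R)) *
        (qPochhammer a q R / qPochhammer q q R) * baileyKernel a q n R) := by
  induction R with
  | zero => simp
  | succ R ih =>
    have hw := baileyKernel_succ_right hq ha n R
    have hR : 1 - q * q ^ R ≠ 0 := sub_ne_zero.mpr (hq R).symm
    have hc : (1 - q ^ (R + 1)) * (qPochhammer a q (R + 1) / qPochhammer q q (R + 1)) =
        (1 - a * q ^ R) * (qPochhammer a q R / qPochhammer q q R) := by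
      rw [qPochhammer_succ, qPochhammer_succ, pow_succ']
      field_simp
    have hu : unitAlpha a q R = (-1) ^ R * q ^ R.choose 2 * (1 - a * q ^ (2 * R)) *
        (qPochhammer a q R / qPochhammer q q R) := mul_div_assoc _ _ _
    rw [sum_range_succ, mul_add, ih, Nat.choose_succ_succ', Nat.choose_one_right, hu]
    generalize qPochhammer a q R / qPochhammer q q R = C at hc ⊢
    linear_combination (-1) ^ (R + 1) * q ^ R.choose 2 *
      (q ^ R * (1 - a * q ^ (n + R + 1)) * baileyKernel a q n (R + 1) * hc +
        (1 - a * q ^ R) * C * hw)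

lemma isBaileyPair_unitAlpha (hq : ∀ k, q * q ^ k ≠ 1) (ha : ∀ k, a * q ^ k ≠ 1) :
    IsBaileyPair a q (unitAlpha a q) (Pi.single 0 1) := by
  rintro (_ | n)
  · have h : 1 - a ≠ 0 := sub_ne_zero.mpr (by simpa using (ha 0).symm)
    simp [unitAlpha, baileyKernel, qPochhammer_succ, h]
  · have h := sum_range_unitAlpha_mul_baileyKernel hq ha (n + 1) (n + 1 + 1)
    rw [baileyKernel_of_lt a q (n + 1).lt_succ_self, mul_zero, neg_zero, pow_succ'] at h
    rw [(mul_eq_zero.mp h).resolve_left (sub_ne_zero.mpr (hq n).symm),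
      Pi.single_eq_of_ne n.succ_ne_zero]

lemma reciprocalAlpha_mul_baileyKernel_succ (hq : ∀ k, q * q ^ k ≠ 1) (hb : ∀ k, b * q ^ k ≠ 1)
    (hc : ∀ k, c * q ^ k ≠ 1) (hbc : ∀ k, b * c * q ^ k ≠ 1) (n r : ℕ) :
    (1 - b * q ^ (n + 1)) * (1 - c * q ^ (n + 1)) *
        (reciprocalAlpha b c q r * baileyKernel (b * c) q (n + 1) r) =
      reciprocalAlpha b c q r * baileyKernel (b * c) q n r +
        q ^ (n + 1) * (unitAlpha (b * c) q r * baileyKernel (b * c) q (n + 1) r) := by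
  have hb' : 1 - b * q ^ r ≠ 0 := sub_ne_zero.mpr (hb r).symm
  have hc' : 1 - c * q ^ r ≠ 0 := sub_ne_zero.mpr (hc r).symm
  have hw := baileyKernel_succ_left hq hbc n r
  rw [reciprocalAlpha]
  field_simp
  linear_combination unitAlpha (b * c) q r * hw

lemma isBaileyPair_reciprocalAlpha (hq : ∀ k, q * q ^ k ≠ 1) (hb : ∀ k, b * q ^ k ≠ 1)
    (hc : ∀ k, c * q ^ k ≠ 1) (hbc : ∀ k, b * c * q ^ k ≠ 1) :
    IsBaileyPair (b * c) q (reciprocalAlpha b c q)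
      fun n => (qPochhammer b q (n + 1) * qPochhammer c q (n + 1))⁻¹ := by
  intro n
  induction n with
  | zero =>
    have h := isBaileyPair_unitAlpha hq hbc 0
    simp only [Pi.single_eq_same, zero_add, sum_range_one] at h ⊢
    rw [reciprocalAlpha, mul_right_comm, ← h]
    simp [qPochhammer_succ]
  | succ n ih =>
    have hunit : ∑ r ∈ range (n + 1 + 1),
        unitAlpha (b * c) q r * baileyKernel (b * c) q (n + 1) r = 0 := by
      rw [← isBaileyPair_unitAlpha hq hbc, Pi.single_eq_of_ne n.succ_ne_zero]
    have hrec : (1 - b * q ^ (n + 1)) * (1 - c * q ^ (n + 1)) *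
        ∑ r ∈ range (n + 1 + 1), reciprocalAlpha b c q r * baileyKernel (b * c) q (n + 1) r =
          (qPochhammer b q (n + 1) * qPochhammer c q (n + 1))⁻¹ := by
      simp only [mul_sum, reciprocalAlpha_mul_baileyKernel_succ hq hb hc hbc]
      rw [sum_add_distrib, ← mul_sum, hunit, sum_range_succ, ← ih,
        baileyKernel_of_lt _ _ n.lt_succ_self, mul_zero, mul_zero, add_zero, add_zero]
    beta_reduce
    rw [qPochhammer_succ b, qPochhammer_succ c, mul_mul_mul_comm, mul_inv_rev, ← hrec,
      inv_mul_cancel_left₀ (mul_ne_zero (sub_ne_zero.mpr (hb _).symm)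
        (sub_ne_zero.mpr (hc _).symm))]

lemma baileyWeight_zero (ρ s q : K) : baileyWeight ρ s q 0 = 1 := by
  simp [baileyWeight]

lemma baileyWeight_succ (ρ s q : K) (n : ℕ) :
    baileyWeight ρ s q (n + 1) = -(s * q ^ n * (1 - ρ * q ^ n)) * baileyWeight ρ s q n := by
  rw [baileyWeight, baileyWeight, qPochhammer_succ, Nat.choose_succ_succ',
    Nat.choose_one_right]
  ring

/-- The antidifference in `n` that certifies the recurrence in `r` of `conjugateWeight`. -/
def conjugateCertificate (a ρ s q : K) (r n : ℕ) : K :=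
  -(1 - a * q ^ (2 * r + 1)) * (1 - a * q ^ (n + r + 1)) *
    (baileyWeight ρ s q n * baileyKernel a q n (r + 1))

lemma conjugateCertificate_succ_sub (hq₀ : q ≠ 0) (hq : ∀ k, q * q ^ k ≠ 1)
    (ha : ∀ k, a * q ^ k ≠ 1) (hρs : ρ * s = a * q) (r n : ℕ) :
    conjugateCertificate a ρ s q r (n + 1) - conjugateCertificate a ρ s q r n =
      (1 - s * q ^ r) * (baileyWeight ρ s q n * baileyKernel a q n (r + 1)) +
        s * q ^ r * (1 - ρ * q ^ r) * (baileyWeight ρ s q n * baileyKernel a q n r) := by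
  have hA : 1 - a * q ^ (n + r + 1) ≠ 0 := sub_ne_zero.mpr (ha _).symm
  have hright := baileyKernel_succ_right hq ha n r
  have hdiag := baileyKernel_succ_succ ha n r
  have hA' : 1 - a * q ^ (n + r + 1) = 1 - ρ * s * q ^ n * q ^ r := by rw [hρs]; ring
  have hB' : 1 - a * q ^ (2 * r + 1) = 1 - ρ * s * q ^ r * q ^ r := by rw [hρs]; ring
  apply mul_left_cancel₀ (mul_ne_zero (pow_ne_zero r hq₀) hA)
  rw [conjugateCertificate, conjugateCertificate, baileyWeight_succ,
    show n + 1 + r + 1 = n + r + 2 by ring]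
  rw [hA'] at hright hdiag ⊢
  rw [hB']
  generalize baileyWeight ρ s q n = D
  linear_combination D * q ^ r * (1 - ρ * s * q ^ r * q ^ r) * (s * q ^ n * (1 - ρ * q ^ n)) * hdiag
    + D * ((1 - ρ * s * q ^ r * q ^ r) * (1 - ρ * s * q ^ n * q ^ r) - (1 - s * q ^ r)) * hright

end BaileyPairs

section Convergence

variable {K : Type*} [NormedField K] {a b c q ρ s : K}

lemma mul_pow_ne_one (ha : ‖a‖ < 1) (hq : ‖q‖ < 1) (k : ℕ) : a * q ^ k ≠ 1 := by
  refine fun h => absurd (congrArg norm h) (ne_of_lt ?_)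
  rw [norm_mul, norm_pow, norm_one]
  exact mul_lt_one_of_nonneg_of_lt_one_left (norm_nonneg _) ha
    (pow_le_one₀ (norm_nonneg _) hq.le)

lemma tendsto_one_sub_mul_pow (hq : ‖q‖ < 1) (a : K) :
    Tendsto (fun n : ℕ => 1 - a * q ^ n) atTop (𝓝 1) := by
  simpa using ((tendsto_pow_atTop_nhds_zero_of_norm_lt_one hq).const_mul a).const_sub 1

lemma isBigO_one_of_norm_le_one {u : ℕ → K} (h : ∀ n, ‖u n‖ ≤ 1) :
    u =O[atTop] (fun _ => (1 : ℝ)) :=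
  isBigO_of_le _ (by simpa using h)

lemma summable_pow_mul_norm_baileyWeight (hq : ‖q‖ < 1) (R : ℝ) (ρ s : K) :
    Summable fun n => R ^ n * ‖baileyWeight ρ s q n‖ := by
  have hratio : Tendsto (fun n : ℕ => |R| * ‖s * q ^ n * (1 - ρ * q ^ n)‖) atTop (𝓝 0) := by
    have h := (tendsto_pow_atTop_nhds_zero_of_norm_lt_one hq).const_mul s
    simpa using ((h.mul (tendsto_one_sub_mul_pow hq ρ)).norm).const_mul |R|
  refine summable_of_ratio_norm_eventually_le (r := 1 / 2) (by norm_num) ?_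
  filter_upwards [hratio.eventually_le_const (show (0 : ℝ) < 1 / 2 by norm_num)] with n hn
  rw [baileyWeight_succ, neg_mul, norm_neg, norm_mul _ (baileyWeight ρ s q n), pow_succ]
  calc ‖R ^ n * R * (‖s * q ^ n * (1 - ρ * q ^ n)‖ * ‖baileyWeight ρ s q n‖)‖
      = |R| * ‖s * q ^ n * (1 - ρ * q ^ n)‖ * ‖R ^ n * ‖baileyWeight ρ s q n‖‖ := by
        simp only [norm_mul, Real.norm_eq_abs, abs_norm]
        ring
    _ ≤ 1 / 2 * ‖R ^ n * ‖baileyWeight ρ s q n‖‖ := by gcongr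

lemma tsum_succ_sub_self {u : ℕ → K} (hu : Summable u) : ∑' n, (u (n + 1) - u n) = -u 0 := by
  rw [((summable_nat_add_iff 1).mpr hu).tsum_sub hu, hu.tsum_eq_zero_add]
  ring

variable [CompleteSpace K]

lemma exists_tendsto_qPochhammer (hq : ‖q‖ < 1) (ha : ∀ k, a * q ^ k ≠ 1) :
    ∃ l ≠ 0, Tendsto (qPochhammer a q) atTop (𝓝 l) := by
  have hsum : Summable fun k => ‖-(a * q ^ k)‖ := by
    simpa using (summable_geometric_of_lt_one (norm_nonneg q) hq).mul_left ‖a‖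
  refine ⟨∏' k, (1 + -(a * q ^ k)), tprod_one_add_ne_zero_of_summable (fun k => ?_) hsum, ?_⟩
  · rw [← sub_eq_add_neg]
    exact sub_ne_zero.mpr (ha k).symm
  · have h := (multipliable_one_add_of_summable hsum).hasProd.tendsto_prod_nat
    simp only [← sub_eq_add_neg] at h ⊢
    exact h

lemma exists_norm_baileyKernel_le (hq : ‖q‖ < 1) (ha : ∀ k, a * q ^ k ≠ 1) :
    ∃ C : ℝ, ∀ n r, ‖baileyKernel a q n r‖ ≤ C := by
  have hinv {a : K} (ha : ∀ k, a * q ^ k ≠ 1) : ∃ C : ℝ, ∀ n, ‖(qPochhammer a q n)⁻¹‖ ≤ C := by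
    obtain ⟨l, hl, h⟩ := exists_tendsto_qPochhammer hq ha
    exact isBigO_one_nat_atTop_iff.mp ((h.inv₀ hl).isBigO_one ℝ)
  obtain ⟨C₁, hC₁⟩ := hinv (mul_pow_ne_one hq hq)
  obtain ⟨C₂, hC₂⟩ := hinv ha
  have hC₁_nonneg : 0 ≤ C₁ := (norm_nonneg _).trans (hC₁ 0)
  have hC₂_nonneg : 0 ≤ C₂ := (norm_nonneg _).trans (hC₂ 0)
  refine ⟨C₁ * C₂, fun n r => ?_⟩
  rw [baileyKernel]
  split_ifs
  · rw [mul_inv, norm_mul]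
    exact mul_le_mul (hC₁ _) (hC₂ _) (norm_nonneg _) hC₁_nonneg
  · rw [norm_zero]
    positivity

lemma summable_baileyWeight_mul (hq : ‖q‖ < 1) (ρ s : K) {u : ℕ → K}
    (hu : u =O[atTop] (fun _ => (1 : ℝ))) : Summable fun n => baileyWeight ρ s q n * u n := by
  have hδ : Summable fun n => ‖baileyWeight ρ s q n‖ := by
    simpa using summable_pow_mul_norm_baileyWeight hq 1 ρ s
  refine summable_of_isBigO_nat hδ ?_
  simpa using (isBigO_refl (baileyWeight ρ s q) atTop).norm_right.mul hu

lemma isBigO_baileyKernel (hq : ‖q‖ < 1) (ha : ∀ k, a * q ^ k ≠ 1) (r : ℕ) :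
    (baileyKernel a q · r) =O[atTop] (fun _ => (1 : ℝ)) := by
  obtain ⟨C, hC⟩ := exists_norm_baileyKernel_le hq ha
  exact isBigO_one_nat_atTop_iff.mpr ⟨C, (hC · r)⟩

-- `δ_n K(n, r)` vanishes for `n < r`, so it is `O(2 ^ n |δ_n| 2 ^ (-r))`, and `2 ^ n δ_n` is still
-- summable because `δ_n` decays like `q ^ (n ^ 2 / 2)`.
lemma summable_uncurry_baileyWeight_mul_baileyKernel (hq : ‖q‖ < 1) (ha : ∀ k, a * q ^ k ≠ 1)
    (ρ s : K) {α : ℕ → K} (hα : α =O[atTop] (fun _ => (1 : ℝ))) :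
    Summable (Function.uncurry fun n r => α r * (baileyWeight ρ s q n * baileyKernel a q n r)) := by
  obtain ⟨B, hB⟩ := isBigO_one_nat_atTop_iff.mp hα
  obtain ⟨C, hC⟩ := exists_norm_baileyKernel_le hq ha
  have hB_nonneg : 0 ≤ B := (norm_nonneg _).trans (hB 0)
  have hC_nonneg : 0 ≤ C := (norm_nonneg _).trans (hC 0 0)
  have hmajorant : Summable fun x : ℕ × ℕ =>
      B * C * (2 ^ x.1 * ‖baileyWeight ρ s q x.1‖ * (1 / 2) ^ x.2) :=
    ((summable_pow_mul_norm_baileyWeight hq 2 ρ s).mul_of_nonneg summable_geometric_two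
      (fun n => by positivity) (fun r => by positivity)).mul_left _
  refine hmajorant.of_norm_bounded fun ⟨n, r⟩ => ?_
  simp only [Function.uncurry_apply_pair, norm_mul]
  rcases lt_or_ge n r with h | h
  · rw [baileyKernel_of_lt a q h, norm_zero, mul_zero, mul_zero]
    positivity
  · have htwo : (1 : ℝ) ≤ 2 ^ n * (1 / 2) ^ r := by
      rw [one_div, inv_pow, ← div_eq_mul_inv, one_le_div (by positivity)]
      exact pow_le_pow_right₀ one_le_two h
    calc ‖α r‖ * (‖baileyWeight ρ s q n‖ * ‖baileyKernel a q n r‖)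
        ≤ B * (‖baileyWeight ρ s q n‖ * C) * 1 := by
          rw [mul_one]
          gcongr
          exacts [hB r, hC n r]
      _ ≤ B * (‖baileyWeight ρ s q n‖ * C) * (2 ^ n * (1 / 2) ^ r) := by gcongr
      _ = B * C * (2 ^ n * ‖baileyWeight ρ s q n‖ * (1 / 2) ^ r) := by ring

/-- The sequence `γ_r = ∑_{n ≥ r} δ_n K(n, r)` conjugate to the weights `δ = baileyWeight ρ s q`,
where `K = baileyKernel a q`. -/
def conjugateWeight (a ρ s q : K) (r : ℕ) : K :=
  ∑' n, baileyWeight ρ s q n * baileyKernel a q n r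

lemma conjugateWeight_succ (hq₀ : q ≠ 0) (hq : ‖q‖ < 1) (ha : ∀ k, a * q ^ k ≠ 1)
    (hρs : ρ * s = a * q) (r : ℕ) :
    (1 - s * q ^ r) * conjugateWeight a ρ s q (r + 1) =
      -(s * q ^ r * (1 - ρ * q ^ r)) * conjugateWeight a ρ s q r := by
  have hsum (r : ℕ) : Summable fun n => baileyWeight ρ s q n * baileyKernel a q n r :=
    summable_baileyWeight_mul hq ρ s (isBigO_baileyKernel hq ha r)
  have hcert : Summable (conjugateCertificate a ρ s q r) := by
    have hfactor : (fun n => 1 - a * q ^ (n + r + 1)) =O[atTop] (fun _ => (1 : ℝ)) :=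
      ((tendsto_one_sub_mul_pow hq a).comp (tendsto_add_atTop_nat (r + 1))).isBigO_one ℝ
    have h := (hfactor.mul (isBigO_baileyKernel hq ha (r + 1)))
    simp only [mul_one] at h
    refine ((summable_baileyWeight_mul hq ρ s h).mul_left (-(1 - a * q ^ (2 * r + 1)))).congr ?_
    intro n
    rw [conjugateCertificate]
    ring
  have htele := tsum_succ_sub_self hcert
  rw [tsum_congr (conjugateCertificate_succ_sub hq₀ (mul_pow_ne_one hq hq) ha hρs r),
    ((hsum (r + 1)).mul_left _).tsum_add ((hsum r).mul_left _), tsum_mul_left, tsum_mul_left,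
    conjugateCertificate, baileyKernel_of_lt a q r.succ_pos, mul_zero, mul_zero, neg_zero] at htele
  rw [conjugateWeight, conjugateWeight]
  linear_combination htele

lemma conjugateWeight_eq (hq₀ : q ≠ 0) (hq : ‖q‖ < 1) (ha : ∀ k, a * q ^ k ≠ 1)
    (hs : ∀ k, s * q ^ k ≠ 1) (hρs : ρ * s = a * q) (r : ℕ) :
    conjugateWeight a ρ s q r =
      conjugateWeight a ρ s q 0 * (baileyWeight ρ s q r / qPochhammer s q r) := by
  induction r with
  | zero => rw [baileyWeight_zero, qPochhammer_zero, div_one, mul_one]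
  | succ r ih =>
    have h₀ : 1 - s * q ^ r ≠ 0 := sub_ne_zero.mpr (hs r).symm
    have h₁ : qPochhammer s q r ≠ 0 := qPochhammer_ne_zero hs r
    apply mul_left_cancel₀ h₀
    rw [conjugateWeight_succ hq₀ hq ha hρs, ih, baileyWeight_succ, qPochhammer_succ]
    field_simp

lemma IsBaileyPair.tsum_baileyWeight_mul {α β : ℕ → K} (h : IsBaileyPair a q α β)
    (hα : α =O[atTop] (fun _ => (1 : ℝ))) (hq : ‖q‖ < 1) (ha : ∀ k, a * q ^ k ≠ 1) (ρ s : K) :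
    ∑' n, baileyWeight ρ s q n * β n = ∑' r, α r * conjugateWeight a ρ s q r := by
  have hrow (n : ℕ) : baileyWeight ρ s q n * β n =
      ∑' r, α r * (baileyWeight ρ s q n * baileyKernel a q n r) := by
    rw [tsum_eq_sum (s := range (n + 1)), h n, mul_sum]
    · exact sum_congr rfl fun r _ => mul_left_comm _ _ _
    · intro r hr
      rw [baileyKernel_of_lt a q (by simpa using hr), mul_zero, mul_zero]
  simp only [hrow, conjugateWeight, ← tsum_mul_left]
  exact (summable_uncurry_baileyWeight_mul_baileyKernel hq ha ρ s hα).tsum_comm.symm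

lemma IsBaileyPair.tsum_baileyWeight_mul_eq {α β : ℕ → K} (h : IsBaileyPair a q α β)
    (hα : α =O[atTop] (fun _ => (1 : ℝ))) (hq₀ : q ≠ 0) (hq : ‖q‖ < 1)
    (ha : ∀ k, a * q ^ k ≠ 1) (hs : ∀ k, s * q ^ k ≠ 1) (hρs : ρ * s = a * q) :
    ∑' n, baileyWeight ρ s q n * β n =
      conjugateWeight a ρ s q 0 * ∑' r, α r * (baileyWeight ρ s q r / qPochhammer s q r) := by
  rw [h.tsum_baileyWeight_mul hα hq ha, ← tsum_mul_left]
  refine tsum_congr fun r => ?_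
  rw [conjugateWeight_eq hq₀ hq ha hs hρs, mul_left_comm]

lemma isBigO_unitAlpha (hq : ‖q‖ < 1) (ha : ∀ k, a * q ^ k ≠ 1) :
    unitAlpha a q =O[atTop] (fun _ => (1 : ℝ)) := by
  obtain ⟨l, -, hl⟩ := exists_tendsto_qPochhammer hq ha
  obtain ⟨m, hm₀, hm⟩ := exists_tendsto_qPochhammer hq (mul_pow_ne_one hq hq)
  have hsign : (fun r : ℕ => (-1) ^ r * q ^ r.choose 2) =O[atTop] (fun _ => (1 : ℝ)) :=
    isBigO_one_of_norm_le_one fun r => by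
      simpa using pow_le_one₀ (norm_nonneg q) hq.le
  have hfactor : (fun r : ℕ => 1 - a * q ^ (2 * r)) =O[atTop] (fun _ => (1 : ℝ)) :=
    ((tendsto_one_sub_mul_pow hq a).comp
      (tendsto_id.const_mul_atTop' two_pos)).isBigO_one ℝ
  have h := (hsign.mul hfactor).mul ((hl.div hm hm₀).isBigO_one ℝ)
  simp only [mul_one] at h
  exact h.congr_left fun r => (mul_div_assoc _ _ _).symm

lemma isBigO_reciprocalAlpha (hq : ‖q‖ < 1) (hbc : ∀ k, b * c * q ^ k ≠ 1) :
    reciprocalAlpha b c q =O[atTop] (fun _ => (1 : ℝ)) := by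
  have hden := (tendsto_one_sub_mul_pow hq b).mul (tendsto_one_sub_mul_pow hq c)
  have hfrac := (tendsto_pow_atTop_nhds_zero_of_norm_lt_one hq).div hden (by simp)
  have h := (isBigO_unitAlpha hq hbc).mul (hfrac.isBigO_one ℝ)
  simp only [mul_one] at h
  exact h

-- The unit Bailey pair evaluates `conjugateWeight (b * c) ρ s q 0` as the inverse of the
-- denominator on the right.
theorem tsum_baileyWeight_div_qPochhammer_mul (hq₀ : q ≠ 0) (hq : ‖q‖ < 1)
    (hb : ∀ k, b * q ^ k ≠ 1) (hc : ∀ k, c * q ^ k ≠ 1) (hbc : ∀ k, b * c * q ^ k ≠ 1)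
    (hs : ∀ k, s * q ^ k ≠ 1) (hρs : ρ * s = b * c * q) :
    ∑' n, baileyWeight ρ s q n / (qPochhammer b q (n + 1) * qPochhammer c q (n + 1)) =
      (∑' r, reciprocalAlpha b c q r * (baileyWeight ρ s q r / qPochhammer s q r)) /
        ∑' r, unitAlpha (b * c) q r * (baileyWeight ρ s q r / qPochhammer s q r) := by
  have hqq : ∀ k, q * q ^ k ≠ 1 := mul_pow_ne_one hq hq
  have hunit := (isBaileyPair_unitAlpha hqq hbc).tsum_baileyWeight_mul_eq
    (isBigO_unitAlpha hq hbc) hq₀ hq hbc hs hρs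
  have hrec := (isBaileyPair_reciprocalAlpha hqq hb hc hbc).tsum_baileyWeight_mul_eq
    (isBigO_reciprocalAlpha hq hbc) hq₀ hq hbc hs hρs
  rw [tsum_eq_single 0 fun n hn => by rw [Pi.single_eq_of_ne hn, mul_zero], baileyWeight_zero,
    Pi.single_eq_same, mul_one] at hunit
  simp only [div_eq_mul_inv (baileyWeight _ _ _ _) (_ * _)]
  rw [hrec, eq_div_iff (right_ne_zero_of_mul_eq_one hunit.symm), mul_right_comm, ← hunit, one_mul]

end Convergence

section Bilateral

variable {K : Type*}

lemma tsum_int_eq_two_mul_tsum_nat [NormedRing K] {f : ℤ → K} (hf : ∀ n, f (1 - n) = f n)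
    (hsum : Summable fun r : ℕ => f (r + 1)) : ∑' n, f n = 2 * ∑' r : ℕ, f (r + 1) := by
  have hreflect (r : ℕ) : f (-((r : ℤ) + 1) + 1) = f (r + 1) := by
    rw [← hf (r + 1), sub_eq_neg_add]
  have hneg : HasSum (fun r : ℕ => f (-((r : ℤ) + 1) + 1)) (∑' r : ℕ, f (r + 1)) := by
    simpa only [hreflect] using hsum.hasSum
  rw [two_mul, ← (HasSum.of_nat_of_neg_add_one (f := fun n => f (n + 1)) hsum.hasSum hneg).tsum_eq]
  exact ((Equiv.addRight (1 : ℤ)).tsum_eq f).symm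

lemma zpow_add_div_one_add_zpow [Field K] {x : K} (hx : x ≠ 0) (m d : ℤ) :
    x ^ (m + d) / (1 + x ^ d) = x ^ m / (1 + x ^ (-d)) := by
  have hd : x ^ d ≠ 0 := zpow_ne_zero d hx
  rw [zpow_add₀ hx, zpow_neg, ← mul_div_mul_right _ (1 + (x ^ d)⁻¹) hd, add_mul,
    inv_mul_cancel₀ hd, one_mul, add_comm]

end Bilateral

section Specialization

variable {K : Type*} [NormedField K] {Q : K}

lemma norm_pow_lt_one (hQ : ‖Q‖ < 1) {k : ℕ} (hk : k ≠ 0) : ‖Q ^ k‖ < 1 := by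
  rw [norm_pow]
  exact pow_lt_one₀ (norm_nonneg Q) hQ hk

lemma one_sub_pow_ne_zero (hQ : ‖Q‖ < 1) {k : ℕ} (hk : k ≠ 0) : 1 - Q ^ k ≠ 0 :=
  sub_ne_zero.mpr fun h => by simpa [← h] using norm_pow_lt_one hQ hk

lemma sq_pow_choose_two_mul_pow (Q : K) (r : ℕ) :
    (Q ^ 2) ^ r.choose 2 * Q ^ r = Q ^ r ^ 2 := by
  rw [← pow_mul, ← pow_add, Nat.choose_two_right, Nat.two_mul_div_two_of_even
    (Nat.even_mul_pred_self r)]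
  congr 1
  cases r with
  | zero => rfl
  | succ r =>
    rw [Nat.add_sub_cancel]
    ring

lemma baileyWeight_cube_div_qPochhammer (hQ : ‖Q‖ < 1) (r : ℕ) :
    baileyWeight Q (Q ^ 3) (Q ^ 2) r / qPochhammer (Q ^ 3) (Q ^ 2) r =
      (-1) ^ r * Q ^ (r ^ 2 + 2 * r) * ((1 - Q) / (1 - Q ^ (2 * r + 1))) := by
  have hQ₂ : ‖Q ^ 2‖ < 1 := norm_pow_lt_one hQ two_ne_zero
  have hP : qPochhammer (Q ^ 3) (Q ^ 2) r ≠ 0 :=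
    qPochhammer_ne_zero (mul_pow_ne_one (norm_pow_lt_one hQ three_ne_zero) hQ₂) r
  have hd : 1 - Q ^ (2 * r + 1) ≠ 0 := one_sub_pow_ne_zero hQ (2 * r).succ_ne_zero
  have h := one_sub_mul_qPochhammer_mul Q (Q ^ 2) r
  rw [← pow_succ', ← pow_mul, ← pow_succ'] at h
  rw [baileyWeight, mul_div_assoc, (div_eq_div_iff hP hd).mpr h.symm, pow_add _ (r ^ 2),
    ← sq_pow_choose_two_mul_pow]
  ring

lemma unitAlpha_sq_mul_baileyWeight_div (hQ : ‖Q‖ < 1) (r : ℕ) :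
    unitAlpha (-Q * -Q) (Q ^ 2) r *
        (baileyWeight Q (Q ^ 3) (Q ^ 2) r / qPochhammer (Q ^ 3) (Q ^ 2) r) =
      (1 - Q) * (Q ^ (2 * r ^ 2 + r) * (1 + Q ^ (2 * r + 1))) := by
  have hQ₂ : ‖Q ^ 2‖ < 1 := norm_pow_lt_one hQ two_ne_zero
  have hP : qPochhammer (Q ^ 2) (Q ^ 2) r ≠ 0 := qPochhammer_ne_zero (mul_pow_ne_one hQ₂ hQ₂) r
  have hd : 1 - Q ^ (2 * r + 1) ≠ 0 := one_sub_pow_ne_zero hQ (2 * r).succ_ne_zero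
  have hsign : ((-1 : K) ^ r) ^ 2 = 1 := by rw [← pow_mul, mul_comm, pow_mul, neg_one_sq, one_pow]
  rw [baileyWeight_cube_div_qPochhammer hQ, unitAlpha, neg_mul_neg, ← sq,
    mul_div_cancel_right₀ _ hP, mul_div_assoc', mul_div_assoc', div_eq_iff hd]
  have hE : (Q ^ 2) ^ r.choose 2 * Q ^ (r ^ 2 + 2 * r) = Q ^ (2 * r ^ 2 + r) := by
    rw [add_comm, two_mul, pow_add _ (r + r), pow_add _ r, ← mul_assoc, ← mul_assoc,
      sq_pow_choose_two_mul_pow]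
    ring
  linear_combination (1 - Q) * (1 - Q ^ (4 * r + 2)) * Q ^ (2 * r ^ 2 + r) * hsign +
    (1 - Q) * (1 - Q ^ (4 * r + 2)) * ((-1 : K) ^ r) ^ 2 * hE

lemma reciprocalAlpha_sq_mul_baileyWeight_div (hQ : ‖Q‖ < 1) (r : ℕ) :
    reciprocalAlpha (-Q) (-Q) (Q ^ 2) r *
        (baileyWeight Q (Q ^ 3) (Q ^ 2) r / qPochhammer (Q ^ 3) (Q ^ 2) r) =
      (1 - Q) * (Q ^ (2 * r ^ 2 + 3 * r) / (1 + Q ^ (2 * r + 1))) := by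
  have hfactor : 1 - -Q * (Q ^ 2) ^ r = 1 + Q ^ (2 * r + 1) := by ring
  have hd : 1 + Q ^ (2 * r + 1) ≠ 0 := by
    rw [← hfactor]
    exact sub_ne_zero.mpr
      (mul_pow_ne_one (by rwa [norm_neg]) (norm_pow_lt_one hQ two_ne_zero) r).symm
  rw [reciprocalAlpha, mul_right_comm, unitAlpha_sq_mul_baileyWeight_div hQ, hfactor]
  field_simp
  ring

lemma summable_pow_div_one_add_pow [CompleteSpace K] (hQ : ‖Q‖ < 1) :
    Summable fun r : ℕ => Q ^ (2 * r ^ 2 + 3 * r) / (1 + Q ^ (2 * r + 1)) := by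
  have hden : Tendsto (fun r : ℕ => 1 - -Q * (Q ^ 2) ^ r) atTop (𝓝 1) :=
    tendsto_one_sub_mul_pow (norm_pow_lt_one hQ two_ne_zero) (-Q)
  have hnum : (fun r => Q ^ (2 * r ^ 2 + 2 * r)) =O[atTop] (fun _ => (1 : ℝ)) :=
    isBigO_one_of_norm_le_one fun r => by
      simpa using pow_le_one₀ (norm_nonneg Q) hQ.le
  have h := (isBigO_refl (fun r : ℕ => Q ^ r) atTop).norm_right.mul
    (hnum.mul ((hden.inv₀ one_ne_zero).isBigO_one ℝ))
  simp only [mul_one, norm_pow] at h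
  refine (summable_of_isBigO_nat (summable_geometric_of_lt_one (norm_nonneg Q) hQ) h).congr
    fun r => ?_
  rw [div_eq_mul_inv]
  ring

lemma tsum_baileyWeight_div_qPochhammer_neg_sq [CompleteSpace K] (hQ₀ : Q ≠ 0) (hQ : ‖Q‖ < 1) :
    ∑' n, baileyWeight Q (Q ^ 3) (Q ^ 2) n / qPochhammer (-Q) (Q ^ 2) (n + 1) ^ 2 =
      (∑' r : ℕ, Q ^ (2 * r ^ 2 + 3 * r) / (1 + Q ^ (2 * r + 1))) /
        ∑' r : ℕ, Q ^ (2 * r ^ 2 + r) * (1 + Q ^ (2 * r + 1)) := by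
  have hQ₁ : 1 - Q ≠ 0 := by simpa using one_sub_pow_ne_zero hQ one_ne_zero
  have hQ₂ : ‖Q ^ 2‖ < 1 := norm_pow_lt_one hQ two_ne_zero
  have hneg : ∀ k, -Q * (Q ^ 2) ^ k ≠ 1 := mul_pow_ne_one (by rwa [norm_neg]) hQ₂
  have hsq : ∀ k, -Q * -Q * (Q ^ 2) ^ k ≠ 1 :=
    mul_pow_ne_one (by rwa [neg_mul_neg, ← sq]) hQ₂
  have hcube : ∀ k, Q ^ 3 * (Q ^ 2) ^ k ≠ 1 :=
    mul_pow_ne_one (norm_pow_lt_one hQ three_ne_zero) hQ₂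
  have h := tsum_baileyWeight_div_qPochhammer_mul (ρ := Q) (pow_ne_zero 2 hQ₀) hQ₂ hneg hneg hsq
    hcube (by ring)
  simp only [← sq (qPochhammer (-Q) (Q ^ 2) _), reciprocalAlpha_sq_mul_baileyWeight_div hQ,
    unitAlpha_sq_mul_baileyWeight_div hQ, tsum_mul_left] at h
  rw [h, mul_div_mul_left _ _ hQ₁]

lemma tsum_pow_odd_sq [CompleteSpace K] {x : K} (hx : ‖x‖ < 1) :
    ∑' n : ℕ, x ^ ((2 * n + 1) ^ 2) =
      x * ∑' r : ℕ, (x ^ 8) ^ (2 * r ^ 2 + r) * (1 + (x ^ 8) ^ (2 * r + 1)) := by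
  have hsum : Summable fun n : ℕ => x ^ ((2 * n + 1) ^ 2) :=
    (summable_geometric_of_norm_lt_one hx).comp_injective (i := fun n : ℕ => (2 * n + 1) ^ 2)
      fun m n h => by simpa using h
  have heven : Summable fun r : ℕ => x ^ ((2 * (2 * r) + 1) ^ 2) :=
    hsum.comp_injective (i := fun r => 2 * r) fun m n h => by simpa using h
  have hodd : Summable fun r : ℕ => x ^ ((2 * (2 * r + 1) + 1) ^ 2) :=
    hsum.comp_injective (i := fun r => 2 * r + 1) fun m n h => by simpa using h
  rw [← tsum_even_add_odd (f := fun n : ℕ => x ^ ((2 * n + 1) ^ 2)) heven hodd,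
    ← heven.tsum_add hodd, ← tsum_mul_left]
  exact tsum_congr fun r => by ring

lemma tsum_int_zpow_div_one_add_zpow [CompleteSpace K] {x : K} (hx₀ : x ≠ 0) (hx : ‖x‖ < 1) :
    ∑' n : ℤ, x ^ (16 * n ^ 2 - 8 * n) / (1 + x ^ (16 * n - 8)) =
      2 * (x ^ 8 * ∑' r : ℕ, (x ^ 8) ^ (2 * r ^ 2 + 3 * r) / (1 + (x ^ 8) ^ (2 * r + 1))) := by
  have hterm (r : ℕ) : x ^ (16 * ((r : ℤ) + 1) ^ 2 - 8 * ((r : ℤ) + 1)) /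
      (1 + x ^ (16 * ((r : ℤ) + 1) - 8)) =
        x ^ 8 * ((x ^ 8) ^ (2 * r ^ 2 + 3 * r) / (1 + (x ^ 8) ^ (2 * r + 1))) := by
    rw [← mul_div_assoc, ← pow_succ', ← pow_mul, ← pow_mul, ← zpow_natCast, ← zpow_natCast]
    push_cast
    ring_nf
  have hsymm (n : ℤ) : x ^ (16 * (1 - n) ^ 2 - 8 * (1 - n)) / (1 + x ^ (16 * (1 - n) - 8)) =
      x ^ (16 * n ^ 2 - 8 * n) / (1 + x ^ (16 * n - 8)) := by
    rw [show 16 * (1 - n) - 8 = -(16 * n - 8) by ring, ← zpow_add_div_one_add_zpow hx₀]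
    ring_nf
  rw [tsum_int_eq_two_mul_tsum_nat hsymm, tsum_congr hterm, tsum_mul_left]
  simp only [hterm]
  exact (summable_pow_div_one_add_pow (norm_pow_lt_one hx (by norm_num))).mul_left _

end Specialization

lemma Mser_eq_tsum_baileyWeight (x : ℂ) :
    Mser x = -(x⁻¹ * (x ^ 8 * ∑' n, baileyWeight (x ^ 8) ((x ^ 8) ^ 3) ((x ^ 8) ^ 2) n /
      qPochhammer (-x ^ 8) ((x ^ 8) ^ 2) (n + 1) ^ 2)) := by
  have hexp (k : ℕ) : x ^ (16 * (k + 1) - 8) = x ^ 8 * ((x ^ 8) ^ 2) ^ k := by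
    rw [← pow_mul, ← pow_mul, ← pow_add]
    congr 1
    omega
  rw [Mser, ← mul_neg, ← neg_mul, ← tsum_mul_left (a := -x ^ 8)]
  congr 1
  refine tsum_congr fun n => ?_
  have hpow : ((x ^ 8) ^ 2) ^ n.choose 2 * ((x ^ 8) ^ 3) ^ n * x ^ 8 = x ^ (8 * (n + 1) ^ 2) := by
    rw [pow_right_comm (x ^ 8) 3 n, pow_succ' _ 2, ← mul_assoc, sq_pow_choose_two_mul_pow]
    ring
  simp only [hexp, prod_pow, qPochhammer, baileyWeight, neg_mul, sub_neg_eq_add, ← hpow]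
  ring

/-- For `τ ∈ ℍ`: `M(q) = −(1/(2Θ₂(τ))) Σ_{n∈ℤ} q^{16n²−8n}/(1+q^{16n−8})`. -/
theorem stmt3 (τ : ℂ) (hτ : 0 < τ.im) :
    Mser (nome τ) =
      -(1 / (2 * Theta2 τ)) *
        ∑' n : ℤ, nome τ ^ (16 * n ^ 2 - 8 * n : ℤ) / (1 + nome τ ^ (16 * n - 8 : ℤ)) := by
  have hx₀ : nome τ ≠ 0 := Complex.exp_ne_zero _
  have hx : ‖nome τ‖ < 1 := UpperHalfPlane.norm_exp_two_pi_I_lt_one ⟨τ, hτ⟩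
  have hQ : ‖nome τ ^ 8‖ < 1 := norm_pow_lt_one hx (by norm_num)
  rw [Mser_eq_tsum_baileyWeight, tsum_baileyWeight_div_qPochhammer_neg_sq (pow_ne_zero 8 hx₀) hQ,
    tsum_int_zpow_div_one_add_zpow hx₀ hx, Theta2, tsum_pow_odd_sq hx]
  ring
end
end

section
/- For every τ in the complex upper half-plane ℍ, one has (q·d/dq)[ (16·Θ₂(τ)⁴ + Θ₃(τ)⁴) / (Θ₂(τ)²·Θ₃(τ)²) ] = −2·Θ₄(τ)⁸ / (Θ₂(τ)²·Θ₃(τ)²). (This is the rescaled form of the identity q·du/dq = −ϑ₄⁸/(8ϑ₂²ϑ₃²) for u = (ϑ₂⁴+ϑ₃⁴)/(2ϑ₂²ϑ₃²) used in evaluating the u-plane integral.) -/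
noncomputable section
open Complex Real

/-- `Θ₃(τ) = 1 + 2 Σ_{n≥1} q^{4n²}`. -/
def Theta3 (τ : ℂ) : ℂ := 1 + 2 * ∑' n : ℕ, nome τ ^ (4 * (n + 1) ^ 2)

/-- `Θ₄(τ) = 1 + 2 Σ_{n≥1} (−1)ⁿ q^{4n²}`. -/
def Theta4 (τ : ℂ) : ℂ := 1 + 2 * ∑' n : ℕ, (-1 : ℂ) ^ (n + 1) * nome τ ^ (4 * (n + 1) ^ 2)

/-!
Write `φ(q) = ∑ q ^ n²` and `ψ(q) = ∑ q ^ (n (n + 1))`, sums over `n : ℤ`. Rotating the lattice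
`ℤ × ℤ` by 45° gives the duplication formulas `φ(q)² = φ(q²)² + q ψ(q²)²` and
`ψ(q)² = 2 φ(q²) ψ(q²)`. They imply Jacobi's quartic identity `φ(q)⁴ = q ψ(q)⁴ + φ(-q)⁴`, and
Landen's transformation of the ratio `ρ = ψ / φ` under `q ↦ q²`. Differentiating the latter
logarithmically shows that the quotient of `E(q) = 1 + 4 q ρ'(q) / ρ(q)` by `φ(-q)⁴` is invariant
under `q ↦ q²`; being continuous at `0`, it is constant, so `E(q) = φ(-q)⁴`.

In terms of `κ = Θ₂ / Θ₃` this says `q dκ/dq = Θ₄⁴ κ`, where now `q = e^{2πiτ}` and the nome of `φ`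
and `ψ` is `q⁴`. The function to differentiate is `16 κ² + κ⁻²`, and Jacobi's identity simplifies
the factor `16 Θ₂⁴ - Θ₃⁴` to `-Θ₄⁴`.
-/

theorem norm_pow_lt_one_s5 {R : Type*} [SeminormedRing R] {q : R} (hq : ‖q‖ < 1) {n : ℕ}
    (hn : n ≠ 0) : ‖q ^ n‖ < 1 :=
  (norm_pow_le' q (Nat.pos_of_ne_zero hn)).trans_lt (pow_lt_one₀ (norm_nonneg q) hq hn)

theorem ball_zero_mem_nhds {E : Type*} [SeminormedAddCommGroup E] {x : E} {r : ℝ} (hx : ‖x‖ < r) :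
    Metric.ball (0 : E) r ∈ nhds x :=
  Metric.isOpen_ball.mem_nhds (mem_ball_zero_iff.mpr hx)

theorem mul_pow_four_add_pow_four_div {K : Type*} [Field K] (c a b : K) :
    (c * a ^ 4 + b ^ 4) / (a ^ 2 * b ^ 2) = c * (a / b) ^ 2 + ((a / b) ^ 2)⁻¹ := by
  rcases eq_or_ne a 0 with rfl | ha
  · simp
  rcases eq_or_ne b 0 with rfl | hb
  · simp
  field_simp

theorem natCast_natAbs_mul_add_one (n : ℤ) : ((n * (n + 1)).natAbs : ℤ) = n * (n + 1) :=
  Int.natAbs_of_nonneg <| by rcases le_or_gt 0 n with h | h <;> nlinarith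

theorem natAbs_neg_mul_neg_add_one (n : ℕ) :
    (-((n : ℤ) + 1) * (-((n : ℤ) + 1) + 1)).natAbs = n * (n + 1) := by
  zify [natCast_natAbs_mul_add_one]
  ring

theorem summable_norm_pow_of_le {𝕜 : Type*} [NormedDivisionRing 𝕜] {q : 𝕜} (hq : ‖q‖ < 1)
    {e : ℕ → ℕ} (he : ∀ n, n ≤ e n) : Summable fun n => ‖q ^ e n‖ :=
  (summable_geometric_of_lt_one (norm_nonneg q) hq).of_nonneg_of_le (fun _ => norm_nonneg _)
    fun n => (norm_pow q _).trans_le (pow_le_pow_of_le_one (norm_nonneg q) hq.le (he n))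

/-- The decomposition of the lattice `ℤ × ℤ` into the pairs with even and with odd coordinate sum,
each parametrized by `ℤ × ℤ` through a rotation by 45°. It splits the square of a theta series. -/
def intProdParityEquiv : (ℤ × ℤ) ⊕ (ℤ × ℤ) ≃ ℤ × ℤ :=
  Equiv.ofBijective
    (Sum.elim (fun p => (p.1 + p.2, p.1 - p.2)) (fun p => (p.1 + p.2 + 1, p.1 - p.2))) <| by
    refine ⟨?_, fun ⟨m, n⟩ => ?_⟩
    · rintro (⟨a, b⟩ | ⟨a, b⟩) (⟨c, d⟩ | ⟨c, d⟩) h <;>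
        simp only [Sum.elim_inl, Sum.elim_inr, Prod.mk.injEq, Sum.inl.injEq, Sum.inr.injEq,
          reduceCtorEq] at h ⊢ <;>
        omega
    · rcases Int.even_or_odd (m + n) with ⟨a, ha⟩ | ⟨a, ha⟩
      · exact ⟨.inl (a, a - n), by simp only [Sum.elim_inl, Prod.mk.injEq]; omega⟩
      · exact ⟨.inr (a, a - n), by simp only [Sum.elim_inr, Prod.mk.injEq]; omega⟩

theorem tsum_int_prod_eq_add {G : Type*} [AddCommGroup G] [UniformSpace G] [IsUniformAddGroup G]
    [CompleteSpace G] [T2Space G] {f : ℤ × ℤ → G} (hf : Summable f) :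
    ∑' p, f p = ∑' p : ℤ × ℤ, f (p.1 + p.2, p.1 - p.2) +
      ∑' p : ℤ × ℤ, f (p.1 + p.2 + 1, p.1 - p.2) := by
  have hf' : Summable (f ∘ intProdParityEquiv) := intProdParityEquiv.summable_iff.mpr hf
  rw [← intProdParityEquiv.tsum_eq f]
  exact Summable.tsum_sum (f := f ∘ intProdParityEquiv) (hf'.comp_injective Sum.inl_injective)
    (hf'.comp_injective Sum.inr_injective)

theorem tsum_pow_mul_tsum_pow {R ι κ : Type*} [NormedRing R] [CompleteSpace R] {q : R}
    {e : ι → ℕ} {f : κ → ℕ} (he : Summable fun i => ‖q ^ e i‖) (hf : Summable fun j => ‖q ^ f j‖) :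
    (∑' i, q ^ e i) * ∑' j, q ^ f j = ∑' p : ι × κ, q ^ (e p.1 + f p.2) := by
  simp only [tsum_mul_tsum_of_summable_norm he hf, pow_add]

theorem tsum_pow_sq_eq_add {R : Type*} [NormedRing R] [CompleteSpace R] {q : R} {e : ℤ → ℕ}
    (he : Summable fun n => ‖q ^ e n‖) :
    (∑' n, q ^ e n) ^ 2 = ∑' p : ℤ × ℤ, q ^ (e (p.1 + p.2) + e (p.1 - p.2)) +
      ∑' p : ℤ × ℤ, q ^ (e (p.1 + p.2 + 1) + e (p.1 - p.2)) := by
  have hs : Summable fun p : ℤ × ℤ => q ^ (e p.1 + e p.2) := by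
    simpa only [pow_add] using summable_mul_of_summable_norm he he
  rw [sq, tsum_pow_mul_tsum_pow he he, tsum_int_prod_eq_add hs]

theorem apply_zero_eq_of_forall_apply_sq {R X : Type*} [SeminormedRing R] [TopologicalSpace X]
    [T1Space X] {f : R → X} {a : X} (hf : ContinuousAt f 0)
    (h : ∀ q, ‖q‖ < 1 → f q = a → f (q ^ 2) = a) {q : R} (hq : ‖q‖ < 1) (hqa : f q = a) :
    f 0 = a := by
  have iterate (n : ℕ) : f (q ^ 2 ^ n) = a := by
    induction n with
    | zero => simpa only [pow_zero, pow_one] using hqa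
    | succ n ih =>
      simpa only [pow_succ 2 n, pow_mul] using h _ (norm_pow_lt_one_s5 hq (by positivity)) ih
  have tendsto_zero : Filter.Tendsto (fun n : ℕ => q ^ 2 ^ n) Filter.atTop (nhds 0) :=
    (tendsto_pow_atTop_nhds_zero_of_norm_lt_one hq).comp
      (tendsto_pow_atTop_atTop_of_one_lt one_lt_two)
  have := hf.tendsto.comp tendsto_zero
  simpa only [Function.comp_def, iterate, tendsto_const_nhds_iff, eq_comm] using this

section Identities

variable {𝕜 : Type*} [NormedField 𝕜]

/-- The theta null value `ϑ₃` as a function of the nome `q`. The exponents are kept in `ℕ` so that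
it behaves well at `q = 0`. -/
def thetaPhi (q : 𝕜) : 𝕜 := ∑' n : ℤ, q ^ n.natAbs ^ 2

/-- The single-valued part of the theta null value `ϑ₂` in the nome `q`:
`ϑ₂ = q ^ (1 / 4) * thetaPsi q`. -/
def thetaPsi (q : 𝕜) : 𝕜 := ∑' n : ℤ, q ^ (n * (n + 1)).natAbs

@[simp]
theorem thetaPhi_zero : thetaPhi (0 : 𝕜) = 1 := by
  rw [thetaPhi, tsum_eq_single 0 fun n hn => by simp [hn]]
  simp

@[simp]
theorem thetaPsi_zero : thetaPsi (0 : 𝕜) = 2 := by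
  have vanishing (n : ℤ) (hn : n ∉ ({0, -1} : Finset ℤ)) : (0 : 𝕜) ^ (n * (n + 1)).natAbs = 0 := by
    simp only [Finset.mem_insert, Finset.mem_singleton, not_or] at hn
    exact zero_pow (by simp only [ne_eq, Int.natAbs_eq_zero, mul_eq_zero]; omega)
  rw [thetaPsi, tsum_eq_sum vanishing]
  norm_num

variable {q : 𝕜}

theorem summable_norm_pow_natAbs_sq (hq : ‖q‖ < 1) :
    Summable fun n : ℤ => ‖q ^ n.natAbs ^ 2‖ :=
  .of_nat_of_neg (summable_norm_pow_of_le hq fun n => Nat.le_self_pow two_ne_zero n)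
    (summable_norm_pow_of_le hq fun n => by simpa using Nat.le_self_pow two_ne_zero n)

theorem summable_norm_pow_natAbs_mul_add_one (hq : ‖q‖ < 1) :
    Summable fun n : ℤ => ‖q ^ (n * (n + 1)).natAbs‖ :=
  .of_nat_of_neg_add_one
    (summable_norm_pow_of_le hq fun n => Nat.le_mul_of_pos_right n n.succ_pos)
    (summable_norm_pow_of_le hq fun n => by
      rw [natAbs_neg_mul_neg_add_one]; exact Nat.le_mul_of_pos_right n n.succ_pos)

variable [CompleteSpace 𝕜]

theorem thetaPhi_eq_one_add_two_mul_tsum (hq : ‖q‖ < 1) :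
    thetaPhi q = 1 + 2 * ∑' n : ℕ, q ^ (n + 1) ^ 2 := by
  rw [thetaPhi, tsum_int_eq_zero_add_two_mul_tsum_pnat (fun n => by simp only [Int.natAbs_neg])
    (summable_norm_pow_natAbs_sq hq).of_norm,
    tsum_pnat_eq_tsum_succ (f := fun n : ℕ => q ^ (n : ℤ).natAbs ^ 2)]
  simp only [Int.natAbs_zero, zero_pow two_ne_zero, pow_zero, Int.natAbs_natCast, nsmul_eq_mul,
    Nat.cast_ofNat]

theorem thetaPsi_eq_two_mul_tsum (hq : ‖q‖ < 1) :
    thetaPsi q = 2 * ∑' n : ℕ, q ^ (n * (n + 1)) := by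
  have hs : Summable fun n : ℕ => q ^ (n * (n + 1)) :=
    (summable_norm_pow_of_le hq fun n => Nat.le_mul_of_pos_right n n.succ_pos).of_norm
  have hnat (n : ℕ) : q ^ ((n : ℤ) * (n + 1)).natAbs = q ^ (n * (n + 1)) := by
    rw [← Nat.cast_add_one, ← Nat.cast_mul, Int.natAbs_natCast]
  have hneg (n : ℕ) : q ^ (-((n : ℤ) + 1) * (-((n : ℤ) + 1) + 1)).natAbs = q ^ (n * (n + 1)) := by
    rw [natAbs_neg_mul_neg_add_one]
  rw [thetaPsi, tsum_of_nat_of_neg_add_one (hs.congr fun n => (hnat n).symm)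
    (hs.congr fun n => (hneg n).symm), tsum_congr hnat, tsum_congr hneg, two_mul]

theorem thetaPhi_sq (hq : ‖q‖ < 1) :
    thetaPhi q ^ 2 = thetaPhi (q ^ 2) ^ 2 + q * thetaPsi (q ^ 2) ^ 2 := by
  have hq2 := norm_pow_lt_one_s5 hq two_ne_zero
  have hsum := summable_norm_pow_natAbs_sq hq
  have hφ := summable_norm_pow_natAbs_sq hq2
  have hψ := summable_norm_pow_natAbs_mul_add_one hq2
  have even_exponent (a b : ℤ) : (a + b).natAbs ^ 2 + (a - b).natAbs ^ 2 =
      2 * (a.natAbs ^ 2 + b.natAbs ^ 2) := by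
    zify
    simp only [sq_abs]
    ring
  have odd_exponent (a b : ℤ) : (a + b + 1).natAbs ^ 2 + (a - b).natAbs ^ 2 =
      2 * ((a * (a + 1)).natAbs + (b * (b + 1)).natAbs) + 1 := by
    zify [natCast_natAbs_mul_add_one]
    simp only [sq_abs]
    ring
  rw [sq (thetaPhi (q ^ 2)), sq (thetaPsi (q ^ 2)), thetaPhi,
    tsum_pow_sq_eq_add hsum, thetaPhi, thetaPsi,
    tsum_pow_mul_tsum_pow hφ hφ, tsum_pow_mul_tsum_pow hψ hψ, ← tsum_mul_left]
  simp only [even_exponent, odd_exponent, ← pow_mul, ← pow_succ']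

theorem thetaPsi_sq (hq : ‖q‖ < 1) :
    thetaPsi q ^ 2 = 2 * (thetaPhi (q ^ 2) * thetaPsi (q ^ 2)) := by
  have hq2 := norm_pow_lt_one_s5 hq two_ne_zero
  have hsum := summable_norm_pow_natAbs_mul_add_one hq
  have hφ := summable_norm_pow_natAbs_sq hq2
  have hψ := summable_norm_pow_natAbs_mul_add_one hq2
  have even_exponent (a b : ℤ) : ((a + b) * (a + b + 1)).natAbs + ((a - b) * (a - b + 1)).natAbs =
      2 * ((a * (a + 1)).natAbs + b.natAbs ^ 2) := by
    zify [natCast_natAbs_mul_add_one]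
    simp only [sq_abs]
    ring
  have odd_exponent (a b : ℤ) :
      ((a + b + 1) * (a + b + 1 + 1)).natAbs + ((a - b) * (a - b + 1)).natAbs =
        2 * ((a + 1).natAbs ^ 2 + (b * (b + 1)).natAbs) := by
    zify [natCast_natAbs_mul_add_one]
    simp only [sq_abs]
    ring
  have shift : ∑' n : ℤ, (q ^ 2) ^ (n + 1).natAbs ^ 2 = thetaPhi (q ^ 2) :=
    (Equiv.addRight (1 : ℤ)).tsum_eq fun n => (q ^ 2) ^ n.natAbs ^ 2
  have hshift : Summable fun n : ℤ => ‖(q ^ 2) ^ (n + 1).natAbs ^ 2‖ :=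
    hφ.comp_injective (add_left_injective (1 : ℤ))
  calc thetaPsi q ^ 2
      = thetaPsi (q ^ 2) * thetaPhi (q ^ 2) + thetaPhi (q ^ 2) * thetaPsi (q ^ 2) := by
        nth_rw 2 [← shift]
        rw [thetaPsi, tsum_pow_sq_eq_add hsum, thetaPhi,
          thetaPsi, tsum_pow_mul_tsum_pow hψ hφ, tsum_pow_mul_tsum_pow hshift hψ]
        simp only [even_exponent, odd_exponent, ← pow_mul]
    _ = 2 * (thetaPhi (q ^ 2) * thetaPsi (q ^ 2)) := by ring

theorem thetaPhi_neg_sq (hq : ‖q‖ < 1) :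
    thetaPhi (-q) ^ 2 = thetaPhi (q ^ 2) ^ 2 - q * thetaPsi (q ^ 2) ^ 2 := by
  rw [thetaPhi_sq (by rwa [norm_neg]), neg_sq, neg_mul, sub_eq_add_neg]

theorem thetaPhi_pow_four (hq : ‖q‖ < 1) :
    thetaPhi q ^ 4 = q * thetaPsi q ^ 4 + thetaPhi (-q) ^ 4 := by
  calc thetaPhi q ^ 4
      = (thetaPhi (q ^ 2) ^ 2 + q * thetaPsi (q ^ 2) ^ 2) ^ 2 := by
        rw [← thetaPhi_sq hq]
        ring
    _ = q * (2 * (thetaPhi (q ^ 2) * thetaPsi (q ^ 2))) ^ 2 +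
          (thetaPhi (q ^ 2) ^ 2 - q * thetaPsi (q ^ 2) ^ 2) ^ 2 := by ring
    _ = q * thetaPsi q ^ 4 + thetaPhi (-q) ^ 4 := by
        rw [← thetaPsi_sq hq, ← thetaPhi_neg_sq hq]
        ring

theorem thetaPhi_sq_mul_thetaPhi_neg_sq (hq : ‖q‖ < 1) :
    thetaPhi q ^ 2 * thetaPhi (-q) ^ 2 = thetaPhi (-q ^ 2) ^ 4 := by
  rw [thetaPhi_sq hq, thetaPhi_neg_sq hq]
  linear_combination thetaPhi_pow_four (norm_pow_lt_one_s5 hq two_ne_zero)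

end Identities

section Analytic

variable {q : ℂ}

theorem differentiableOn_tsum_pow {ι : Type*} {e : ι → ℕ}
    (he : ∀ q : ℂ, ‖q‖ < 1 → Summable fun i => ‖q ^ e i‖) :
    DifferentiableOn ℂ (fun q => ∑' i, q ^ e i) (Metric.ball (0 : ℂ) 1) := by
  intro q hq
  obtain ⟨r, hqr, hr⟩ := exists_between (mem_ball_zero_iff.mp hq)
  have hr0 : 0 ≤ r := (norm_nonneg q).trans hqr.le
  have hdiff : DifferentiableOn ℂ (fun q => ∑' i, q ^ e i) (Metric.ball (0 : ℂ) r) := by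
    refine Complex.differentiableOn_tsum_of_summable_norm (u := fun i => r ^ e i) ?_
      (fun i => by fun_prop) Metric.isOpen_ball fun i w hw => ?_
    · simpa [abs_of_nonneg hr0] using he r (by simpa [abs_of_nonneg hr0] using hr)
    · rw [norm_pow]
      exact pow_le_pow_left₀ (norm_nonneg w) (mem_ball_zero_iff.mp hw).le _
  exact (hdiff.differentiableAt
    (ball_zero_mem_nhds hqr)).differentiableWithinAt

theorem differentiableOn_thetaPhi : DifferentiableOn ℂ thetaPhi (Metric.ball (0 : ℂ) 1) :=
  differentiableOn_tsum_pow fun _ => summable_norm_pow_natAbs_sq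

theorem differentiableOn_thetaPsi : DifferentiableOn ℂ thetaPsi (Metric.ball (0 : ℂ) 1) :=
  differentiableOn_tsum_pow fun _ => summable_norm_pow_natAbs_mul_add_one

theorem continuousAt_thetaPhi_neg_zero : ContinuousAt (fun q : ℂ => thetaPhi (-q)) 0 :=
  ContinuousAt.comp' (by
    simpa using (differentiableOn_thetaPhi.differentiableAt
      (ball_zero_mem_nhds (by simp))).continuousAt) continuousAt_neg

theorem thetaPhi_ne_zero (hq : ‖q‖ < 1) : thetaPhi q ≠ 0 := by
  intro h0
  have key := apply_zero_eq_of_forall_apply_sq (q := -q) (a := 0) continuousAt_thetaPhi_neg_zero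
    (fun z hz h => eq_zero_of_pow_eq_zero (n := 4) <| by
      rw [← thetaPhi_sq_mul_thetaPhi_neg_sq hz, h, zero_pow two_ne_zero, mul_zero])
    (by rwa [norm_neg]) (by rwa [neg_neg])
  rw [neg_zero, thetaPhi_zero] at key
  exact one_ne_zero key

theorem thetaPsi_ne_zero (hq : ‖q‖ < 1) : thetaPsi q ≠ 0 := by
  intro h0
  have key := apply_zero_eq_of_forall_apply_sq (a := 0)
    (differentiableOn_thetaPsi.differentiableAt (ball_zero_mem_nhds (by simp))).continuousAt
    (fun z hz h => by
      simpa [h, thetaPhi_ne_zero (norm_pow_lt_one_s5 hz two_ne_zero)] using thetaPsi_sq hz) hq h0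
  rw [thetaPsi_zero] at key
  exact two_ne_zero key

/-- The quotient `ϑ₂ / ϑ₃` in the nome `q`, without its multivalued factor `q ^ (1 / 4)`. -/
def thetaRatio (q : ℂ) : ℂ := thetaPsi q / thetaPhi q

theorem thetaRatio_ne_zero (hq : ‖q‖ < 1) : thetaRatio q ≠ 0 :=
  div_ne_zero (thetaPsi_ne_zero hq) (thetaPhi_ne_zero hq)

theorem differentiableOn_thetaRatio : DifferentiableOn ℂ thetaRatio (Metric.ball (0 : ℂ) 1) :=
  differentiableOn_thetaPsi.fun_div differentiableOn_thetaPhi fun _ hq =>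
    thetaPhi_ne_zero (mem_ball_zero_iff.mp hq)

theorem hasDerivAt_thetaRatio (hq : ‖q‖ < 1) :
    HasDerivAt thetaRatio (logDeriv thetaRatio q * thetaRatio q) q := by
  rw [logDeriv_apply, div_mul_cancel₀ _ (thetaRatio_ne_zero hq)]
  exact (differentiableOn_thetaRatio.differentiableAt (ball_zero_mem_nhds hq)).hasDerivAt

theorem one_add_mul_thetaRatio_sq (hq : ‖q‖ < 1) :
    1 + q * thetaRatio (q ^ 2) ^ 2 = thetaPhi q ^ 2 / thetaPhi (q ^ 2) ^ 2 := by
  have := thetaPhi_ne_zero (norm_pow_lt_one_s5 hq two_ne_zero)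
  rw [thetaPhi_sq hq, thetaRatio]
  field_simp

theorem one_sub_mul_thetaRatio_sq (hq : ‖q‖ < 1) :
    1 - q * thetaRatio (q ^ 2) ^ 2 = thetaPhi (-q) ^ 2 / thetaPhi (q ^ 2) ^ 2 := by
  simpa only [neg_sq, neg_mul, ← sub_eq_add_neg] using
    one_add_mul_thetaRatio_sq (q := -q) (by rwa [norm_neg])

theorem thetaRatio_landen (hq : ‖q‖ < 1) :
    thetaRatio q ^ 2 * (1 + q * thetaRatio (q ^ 2) ^ 2) = 2 * thetaRatio (q ^ 2) := by
  have := thetaPhi_ne_zero hq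
  have := thetaPhi_ne_zero (norm_pow_lt_one_s5 hq two_ne_zero)
  rw [one_add_mul_thetaRatio_sq hq, thetaRatio, div_pow, thetaPsi_sq hq, thetaRatio]
  field_simp

/-- Four times the Euler derivative `q d/dq` of `log (ϑ₂ / ϑ₃) = log (q ^ (1 / 4) * thetaRatio q)`,
scaled so that it takes the value `1` at `q = 0`. -/
def thetaRatioEulerDeriv (q : ℂ) : ℂ := 1 + 4 * q * logDeriv thetaRatio q

theorem thetaRatioEulerDeriv_landen (hq : ‖q‖ < 1) :
    thetaRatioEulerDeriv q * (1 + q * thetaRatio (q ^ 2) ^ 2) =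
      thetaRatioEulerDeriv (q ^ 2) * (1 - q * thetaRatio (q ^ 2) ^ 2) := by
  have hq2 := norm_pow_lt_one_s5 hq two_ne_zero
  have hR : HasDerivAt (fun z => thetaRatio (z ^ 2))
      (logDeriv thetaRatio (q ^ 2) * thetaRatio (q ^ 2) * (2 * q)) q := by
    refine (HasDerivAt.comp q (hasDerivAt_thetaRatio hq2) (hasDerivAt_pow 2 q)).congr_deriv ?_
    simp only [Nat.cast_ofNat, Nat.add_one_sub_one, pow_one]
  have hleft := ((hasDerivAt_thetaRatio hq).fun_pow 2).fun_mul
    (((hasDerivAt_id' q).fun_mul (hR.fun_pow 2)).const_add 1)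
  have hlanden : (fun z => thetaRatio z ^ 2 * (1 + z * thetaRatio (z ^ 2) ^ 2)) =ᶠ[nhds q]
      fun z => 2 * thetaRatio (z ^ 2) :=
    Filter.eventually_of_mem (ball_zero_mem_nhds hq) fun z hz =>
      thetaRatio_landen (mem_ball_zero_iff.mp hz)
  have hderiv := hleft.unique ((hR.const_mul 2).congr_of_eventuallyEq hlanden)
  have hland := thetaRatio_landen hq
  refine mul_left_cancel₀ (pow_ne_zero 2 (thetaRatio_ne_zero hq)) ?_
  rw [thetaRatioEulerDeriv, thetaRatioEulerDeriv]
  simp only [Nat.cast_ofNat, Nat.add_one_sub_one, pow_one, one_mul] at hderiv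
  linear_combination 2 * q * hderiv - 4 * q ^ 2 * logDeriv thetaRatio (q ^ 2) * hland

theorem thetaRatioEulerDeriv_sq_div_thetaPhi_pow_four (hq : ‖q‖ < 1) :
    thetaRatioEulerDeriv (q ^ 2) / thetaPhi (-q ^ 2) ^ 4 =
      thetaRatioEulerDeriv q / thetaPhi (-q) ^ 4 := by
  have hpos := thetaPhi_ne_zero hq
  have hneg := thetaPhi_ne_zero (q := -q) (by rwa [norm_neg])
  have hsq := thetaPhi_ne_zero (norm_pow_lt_one_s5 hq two_ne_zero)
  have key := thetaRatioEulerDeriv_landen hq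
  rw [one_add_mul_thetaRatio_sq hq, one_sub_mul_thetaRatio_sq hq] at key
  rw [← thetaPhi_sq_mul_thetaPhi_neg_sq hq]
  field_simp at key ⊢
  exact key.symm

theorem continuousAt_thetaRatioEulerDeriv_zero : ContinuousAt thetaRatioEulerDeriv 0 := by
  have h0 : Metric.ball (0 : ℂ) 1 ∈ nhds 0 := ball_zero_mem_nhds (by simp)
  have hlog : ContinuousAt (logDeriv thetaRatio) 0 :=
    (differentiableOn_thetaRatio.deriv Metric.isOpen_ball).differentiableAt h0 |>.continuousAt.div
      (differentiableOn_thetaRatio.differentiableAt h0).continuousAt (thetaRatio_ne_zero (by simp))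
  exact continuousAt_const.add ((continuousAt_const.mul continuousAt_id).mul hlog)

theorem thetaRatioEulerDeriv_eq_thetaPhi_neg_pow_four (hq : ‖q‖ < 1) :
    thetaRatioEulerDeriv q = thetaPhi (-q) ^ 4 := by
  have hcont : ContinuousAt (fun q => thetaRatioEulerDeriv q / thetaPhi (-q) ^ 4) 0 :=
    ContinuousAt.div continuousAt_thetaRatioEulerDeriv_zero
      (ContinuousAt.fun_pow continuousAt_thetaPhi_neg_zero 4) (by simp)
  have hconst := apply_zero_eq_of_forall_apply_sq hcont
    (fun z hz h => (thetaRatioEulerDeriv_sq_div_thetaPhi_pow_four hz).trans h) hq rfl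
  have hneg : thetaPhi (-q) ≠ 0 := thetaPhi_ne_zero (by rwa [norm_neg])
  rw [eq_div_iff (pow_ne_zero 4 hneg)] at hconst
  simpa [thetaRatioEulerDeriv] using hconst.symm

end Analytic

section UpperHalfPlane

variable {τ : ℂ}

theorem norm_nome_lt_one (hτ : 0 < τ.im) : ‖nome τ‖ < 1 := by
  rw [nome, Complex.norm_exp, Real.exp_lt_one_iff]
  simpa using mul_pos Real.two_pi_pos hτ

theorem hasDerivAt_nome (τ : ℂ) : HasDerivAt nome (2 * π * I * nome τ) τ := by
  refine (hasDerivAt_const_mul (2 * (π : ℂ) * I)).cexp.congr_deriv ?_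
  rw [nome, mul_comm]

theorem theta2_eq_nome_mul_thetaPsi (hτ : 0 < τ.im) :
    Theta2 τ = nome τ * thetaPsi (nome τ ^ 4) / 2 := by
  rw [Theta2, thetaPsi_eq_two_mul_tsum (norm_pow_lt_one_s5 (norm_nome_lt_one hτ) four_ne_zero),
    mul_left_comm, mul_div_cancel_left₀ _ two_ne_zero, ← tsum_mul_left]
  refine tsum_congr fun n => ?_
  rw [← pow_mul, ← pow_succ']
  ring_nf

theorem theta3_eq_thetaPhi (hτ : 0 < τ.im) : Theta3 τ = thetaPhi (nome τ ^ 4) := by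
  rw [Theta3, thetaPhi_eq_one_add_two_mul_tsum (norm_pow_lt_one_s5 (norm_nome_lt_one hτ) four_ne_zero)]
  simp only [pow_mul]

theorem theta4_eq_thetaPhi_neg (hτ : 0 < τ.im) : Theta4 τ = thetaPhi (-nome τ ^ 4) := by
  have neg_one_pow_sq (n : ℕ) : (-1 : ℂ) ^ n ^ 2 = (-1) ^ n := by
    rcases Nat.even_or_odd n with h | h
    · rw [h.neg_one_pow, (h.pow_of_ne_zero two_ne_zero).neg_one_pow]
    · rw [h.neg_one_pow, h.pow.neg_one_pow]
  rw [Theta4, thetaPhi_eq_one_add_two_mul_tsum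
    ((norm_neg _).trans_lt (norm_pow_lt_one_s5 (norm_nome_lt_one hτ) four_ne_zero))]
  simp only [neg_pow (nome τ ^ 4), neg_one_pow_sq, pow_mul]

theorem theta2_ne_zero (hτ : 0 < τ.im) : Theta2 τ ≠ 0 := by
  rw [theta2_eq_nome_mul_thetaPsi hτ]
  exact div_ne_zero (mul_ne_zero (Complex.exp_ne_zero _)
    (thetaPsi_ne_zero (norm_pow_lt_one_s5 (norm_nome_lt_one hτ) four_ne_zero))) two_ne_zero

theorem theta3_ne_zero (hτ : 0 < τ.im) : Theta3 τ ≠ 0 := by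
  rw [theta3_eq_thetaPhi hτ]
  exact thetaPhi_ne_zero (norm_pow_lt_one_s5 (norm_nome_lt_one hτ) four_ne_zero)

theorem theta3_pow_four (hτ : 0 < τ.im) : Theta3 τ ^ 4 = 16 * Theta2 τ ^ 4 + Theta4 τ ^ 4 := by
  rw [theta2_eq_nome_mul_thetaPsi hτ, theta3_eq_thetaPhi hτ, theta4_eq_thetaPhi_neg hτ,
    thetaPhi_pow_four (norm_pow_lt_one_s5 (norm_nome_lt_one hτ) four_ne_zero)]
  ring

theorem hasDerivAt_theta2_div_theta3 (hτ : 0 < τ.im) :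
    HasDerivAt (fun σ => Theta2 σ / Theta3 σ)
      (2 * π * I * Theta4 τ ^ 4 * (Theta2 τ / Theta3 τ)) τ := by
  have eq_ratio {σ : ℂ} (hσ : 0 < σ.im) :
      Theta2 σ / Theta3 σ = nome σ * thetaRatio (nome σ ^ 4) / 2 := by
    rw [theta2_eq_nome_mul_thetaPsi hσ, theta3_eq_thetaPhi hσ, thetaRatio]
    ring
  have hev : (fun σ => Theta2 σ / Theta3 σ) =ᶠ[nhds τ]
      fun σ => nome σ * thetaRatio (nome σ ^ 4) / 2 :=
    Filter.eventually_of_mem ((isOpen_lt continuous_const continuous_im).mem_nhds hτ)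
      fun _ => eq_ratio
  have hy := norm_pow_lt_one_s5 (norm_nome_lt_one hτ) four_ne_zero
  have hnome := hasDerivAt_nome τ
  have hratio := HasDerivAt.comp τ (hasDerivAt_thetaRatio hy) (hnome.fun_pow 4)
  refine (((hnome.fun_mul hratio).div_const 2).congr_of_eventuallyEq hev).congr_deriv ?_
  rw [eq_ratio hτ, theta4_eq_thetaPhi_neg hτ, ← thetaRatioEulerDeriv_eq_thetaPhi_neg_pow_four hy,
    thetaRatioEulerDeriv]
  simp only [Function.comp_apply]
  push_cast
  ring

end UpperHalfPlane

/-- For `τ ∈ ℍ`: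
`(q d/dq)[(16Θ₂⁴+Θ₃⁴)/(Θ₂²Θ₃²)] = −2Θ₄⁸/(Θ₂²Θ₃²)`, where `q d/dq = (2πi)⁻¹ d/dτ`. -/
theorem stmt5 (τ : ℂ) (hτ : 0 < τ.im) :
    (1 / (2 * (π : ℂ) * I)) *
        deriv (fun σ : ℂ => (16 * Theta2 σ ^ 4 + Theta3 σ ^ 4) / (Theta2 σ ^ 2 * Theta3 σ ^ 2)) τ =
      -2 * Theta4 τ ^ 8 / (Theta2 τ ^ 2 * Theta3 τ ^ 2) := by
  have h2 := theta2_ne_zero hτ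
  have h3 := theta3_ne_zero hτ
  have hsq := (hasDerivAt_theta2_div_theta3 hτ).fun_pow 2
  have hderiv := (hsq.const_mul 16).fun_add (hsq.fun_inv (pow_ne_zero 2 (div_ne_zero h2 h3)))
  simp only [mul_pow_four_add_pow_four_div]
  rw [hderiv.deriv]
  have h8 : Theta4 τ ^ 8 = Theta4 τ ^ 4 * (Theta3 τ ^ 4 - 16 * Theta2 τ ^ 4) := by
    rw [theta3_pow_four hτ]
    ring
  rw [h8]
  push_cast
  field_simp
  ring
end
end
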